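/- For every L ≥ 0, the moments of the Calkin–Wilf limit distribution satisfy M_L = Σ_{i=0}^{L} C(L,i) · m_i · b_{L−i}, where C(L,i) is the binomial coefficient. -/

import Mathlib

open Filter

/-- The generations of the Calkin–Wilf tree: `CW 0 = [1/1]` is the first
generation, and each generation is obtained from the previous one by replacing
each entry `x` by `x/(x+1)` and `x+1`, in this order.  Thus the `n`-th
generation of the paper is `CW (n-1)`. -/
def CW : ℕ → List ℚ
  | 0 => [1]
  | n + 1 => (CW n).flatMap (fun x => [x / (x + 1), x + 1])

open scoped Classical in
/-- `Fcw n` is the distribution function of the `(n+1)`-st generation of the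
Calkin–Wilf tree: `Fcw (n-1) x = F_n(x) = 2^(1-n) · #{j : x_j^(n) ≤ x}`. -/
noncomputable def Fcw (n : ℕ) (x : ℝ) : ℝ :=
  ((CW n).countP (fun q => decide ((q : ℝ) ≤ x))) / 2 ^ n

open MeasureTheory

lemma CW_pos (n : ℕ) : ∀ q ∈ CW n, 0 < q := by
  induction n with
  | zero => simp [CW]
  | succ n ih =>
    intro q hq
    simp only [CW, List.mem_flatMap] at hq
    obtain ⟨a, ha, hq⟩ := hq
    have := ih a ha
    simp only [List.mem_cons, List.not_mem_nil, or_false] at hq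
    rcases hq with rfl | rfl <;> positivity

lemma CW_length (n : ℕ) : (CW n).length = 2 ^ n := by
  induction n with
  | zero => simp [CW]
  | succ n ih =>
    simp [CW, List.length_flatMap, ih, pow_succ]

open scoped Classical in
lemma count_hi (x : ℝ) (hx : 1 ≤ x) (l : List ℚ) (hl : ∀ q ∈ l, 0 < q) :
    (l.flatMap (fun x : ℚ => [x / (x + 1), x + 1])).countP (fun q : ℚ => decide ((q : ℝ) ≤ x))
      = l.length + l.countP (fun q : ℚ => decide ((q : ℝ) ≤ x - 1)) := by
  induction l with
  | nil => simp
  | cons a l ih =>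
    have ha : (0:ℝ) < a := by exact_mod_cast hl a (by simp)
    have ih := ih (fun q hq => hl q (by simp [hq]))
    have h1 : (a:ℝ) / (a + 1) ≤ x := by
      rw [div_le_iff₀ (by positivity)]; nlinarith
    have h2 : ((a:ℝ) + 1 ≤ x) ↔ (a:ℝ) ≤ x - 1 := by constructor <;> intro h <;> linarith
    simp only [List.flatMap_cons, List.countP_append, ih, List.countP_cons, List.length_cons,
      List.countP_nil]
    push_cast
    simp only [h1, h2]
    simp
    ring

open scoped Classical in
lemma count_lo (x : ℝ) (hx : x < 1) (l : List ℚ) (hl : ∀ q ∈ l, 0 < q) :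
    (l.flatMap (fun x : ℚ => [x / (x + 1), x + 1])).countP (fun q : ℚ => decide ((q : ℝ) ≤ x))
      = l.countP (fun q : ℚ => decide ((q : ℝ) ≤ x / (1 - x))) := by
  induction l with
  | nil => simp
  | cons a l ih =>
    have ha : (0:ℝ) < a := by exact_mod_cast hl a (by simp)
    have ih := ih (fun q hq => hl q (by simp [hq]))
    have h1 : ((a:ℝ) / (a + 1) ≤ x) ↔ (a:ℝ) ≤ x / (1 - x) := by
      rw [div_le_iff₀ (by positivity), le_div_iff₀ (by linarith)]
      constructor <;> intro h <;> linarith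
    have h2 : ¬ ((a:ℝ) + 1 ≤ x) := by linarith
    simp only [List.flatMap_cons, List.countP_append, ih, List.countP_cons,
      List.countP_nil]
    push_cast
    simp only [h1, h2]
    simp
    ring

open scoped Classical in
lemma Fcw_eq (n : ℕ) (x : ℝ) :
    Fcw n x = ((CW n).countP (fun q : ℚ => decide ((q : ℝ) ≤ x)) : ℕ) / 2 ^ n := by
  unfold Fcw
  congr 2
  induction CW n with
  | nil => simp
  | cons a l ih =>
    simp only [List.bind_eq_flatMap, List.pure_def, List.flatMap_cons] at ih ⊢
    rw [List.countP_append, ih, List.countP_cons, List.countP_cons, List.countP_nil]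
    ring

lemma Fcw_zero (n : ℕ) : Fcw n 0 = 0 := by
  rw [Fcw_eq, List.countP_eq_zero.2]
  · simp
  · intro q hq
    have := CW_pos n q hq
    simpa using this

lemma Fcw_hi (n : ℕ) (x : ℝ) (hx : 1 ≤ x) : Fcw (n + 1) x = (1 + Fcw n (x - 1)) / 2 := by
  rw [Fcw_eq, Fcw_eq, CW, count_hi x hx _ (CW_pos n), CW_length, pow_succ]
  push_cast
  field_simp

lemma Fcw_lo (n : ℕ) (x : ℝ) (hx : x < 1) : Fcw (n + 1) x = (Fcw n (x / (1 - x))) / 2 := by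
  rw [Fcw_eq, Fcw_eq, CW, count_lo x hx _ (CW_pos n), pow_succ]
  field_simp

lemma F_zero {F : ℝ → ℝ}
    (hF : ∀ x : ℝ, 0 ≤ x → Tendsto (fun n => Fcw n x) atTop (nhds (F x)))
    : F 0 = 0 := by
  refine tendsto_nhds_unique (hF 0 le_rfl) ?_
  simp [Fcw_zero]

lemma F_nonneg {F : ℝ → ℝ}
    (hF : ∀ x : ℝ, 0 ≤ x → Tendsto (fun n => Fcw n x) atTop (nhds (F x)))
    (x : ℝ) (hx : 0 ≤ x) : 0 ≤ F x :=
  ge_of_tendsto' (hF x hx) fun n => by unfold Fcw; positivity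

lemma F_hi {F : ℝ → ℝ}
    (hF : ∀ x : ℝ, 0 ≤ x → Tendsto (fun n => Fcw n x) atTop (nhds (F x)))
    (x : ℝ) (hx : 1 ≤ x) : F x = (1 + F (x - 1)) / 2 := by
  refine tendsto_nhds_unique ((tendsto_add_atTop_iff_nat 1).2 (hF x (by linarith))) ?_
  simp only [Fcw_hi _ x hx]
  exact ((hF (x - 1) (by linarith)).const_add 1).div_const 2

lemma F_lo {F : ℝ → ℝ}
    (hF : ∀ x : ℝ, 0 ≤ x → Tendsto (fun n => Fcw n x) atTop (nhds (F x)))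
    (x : ℝ) (h0 : 0 ≤ x) (hx : x < 1) : F x = F (x / (1 - x)) / 2 := by
  refine tendsto_nhds_unique ((tendsto_add_atTop_iff_nat 1).2 (hF x h0)) ?_
  simp only [Fcw_lo _ x hx]
  exact (hF _ (div_nonneg h0 (by linarith))).div_const 2

lemma F_nat {F : ℝ → ℝ}
    (hF : ∀ x : ℝ, 0 ≤ x → Tendsto (fun n => Fcw n x) atTop (nhds (F x)))
    (k : ℕ) : F k = 1 - (1 / 2) ^ k := by
  induction k with
  | zero => simp [F_zero hF]
  | succ k ih =>
    rw [F_hi hF _ (by push_cast; linarith [k.cast_nonneg (α := ℝ)])]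
    push_cast
    rw [add_sub_cancel_right, ih, pow_succ]
    ring

lemma mu_Ioc {F : ℝ → ℝ}
    (hF : ∀ x : ℝ, 0 ≤ x → Tendsto (fun n => Fcw n x) atTop (nhds (F x)))
    {μ : Measure ℝ} [IsProbabilityMeasure μ]
    (hμ : ∀ a b : ℝ, a ≤ b → μ (Set.Ioc a b) = ENNReal.ofReal (F b - F a))
    (x : ℝ) (hx : 0 ≤ x) : μ.real (Set.Ioc 0 x) = F x := by
  rw [Measure.real, hμ 0 x hx, F_zero hF, sub_zero, ENNReal.toReal_ofReal (F_nonneg hF x hx)]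

lemma mu_Iic_zero {F : ℝ → ℝ}
    (hF : ∀ x : ℝ, 0 ≤ x → Tendsto (fun n => Fcw n x) atTop (nhds (F x)))
    {μ : Measure ℝ} [IsProbabilityMeasure μ]
    (hμ : ∀ a b : ℝ, a ≤ b → μ (Set.Ioc a b) = ENNReal.ofReal (F b - F a))
    : μ.real (Set.Iic 0) = 0 := by
  have h : ∀ k : ℕ, μ.real (Set.Iic 0) ≤ (1 / 2) ^ k := by
    intro k
    have h1 : μ.real (Set.Iic 0 ∪ Set.Ioc 0 (k:ℝ)) ≤ 1 := measureReal_le_one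
    rw [measureReal_union (by
      rw [Set.disjoint_left]; intro y hy hy'
      exact absurd hy'.1 (not_lt.2 hy)) measurableSet_Ioc, mu_Ioc hF hμ _ k.cast_nonneg,
      F_nat hF] at h1
    linarith
  have := ge_of_tendsto' (tendsto_pow_atTop_nhds_zero_of_lt_one (r := (1/2 : ℝ))
    (by norm_num) (by norm_num)) h
  exact le_antisymm this measureReal_nonneg

lemma ae_pos {F : ℝ → ℝ}
    (hF : ∀ x : ℝ, 0 ≤ x → Tendsto (fun n => Fcw n x) atTop (nhds (F x)))
    {μ : Measure ℝ} [IsProbabilityMeasure μ]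
    (hμ : ∀ a b : ℝ, a ≤ b → μ (Set.Ioc a b) = ENNReal.ofReal (F b - F a))
    : ∀ᵐ x ∂μ, 0 < x := by
  have := mu_Iic_zero hF hμ
  rw [measureReal_eq_zero_iff] at this
  rw [ae_iff]
  convert this using 2
  ext; simp

lemma mu_Iic {F : ℝ → ℝ}
    (hF : ∀ x : ℝ, 0 ≤ x → Tendsto (fun n => Fcw n x) atTop (nhds (F x)))
    {μ : Measure ℝ} [IsProbabilityMeasure μ]
    (hμ : ∀ a b : ℝ, a ≤ b → μ (Set.Ioc a b) = ENNReal.ofReal (F b - F a))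
    (x : ℝ) (hx : 0 ≤ x) : μ.real (Set.Iic x) = F x := by
  rw [← mu_Ioc hF hμ x hx]
  apply measureReal_congr
  filter_upwards [ae_pos hF hμ] with y hy
  apply propext
  change y ≤ x ↔ 0 < y ∧ y ≤ x
  tauto

lemma mu_Iic_neg {F : ℝ → ℝ}
    (hF : ∀ x : ℝ, 0 ≤ x → Tendsto (fun n => Fcw n x) atTop (nhds (F x)))
    {μ : Measure ℝ} [IsProbabilityMeasure μ]
    (hμ : ∀ a b : ℝ, a ≤ b → μ (Set.Ioc a b) = ENNReal.ofReal (F b - F a))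
    (x : ℝ) (hx : x ≤ 0) : μ.real (Set.Iic x) = 0 := by
  refine le_antisymm ?_ measureReal_nonneg
  rw [← mu_Iic_zero hF hμ]
  exact measureReal_mono (Set.Iic_subset_Iic.2 hx)

lemma mu_fix_Iic {F : ℝ → ℝ}
    (hF : ∀ x : ℝ, 0 ≤ x → Tendsto (fun n => Fcw n x) atTop (nhds (F x)))
    {μ : Measure ℝ} [IsProbabilityMeasure μ]
    (hμ : ∀ a b : ℝ, a ≤ b → μ (Set.Ioc a b) = ENNReal.ofReal (F b - F a))
    (x : ℝ) : μ.real (Set.Iic x) =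
    (μ.real ((fun y => y / (y + 1)) ⁻¹' Set.Iic x) + μ.real ((fun y => y + 1) ⁻¹' Set.Iic x)) / 2 := by
  have e2 : (fun y : ℝ => y + 1) ⁻¹' Set.Iic x = Set.Iic (x - 1) := by
    ext y; simp [le_sub_iff_add_le]
  rw [e2]
  rcases lt_or_ge x 1 with h1 | h1
  · rw [mu_Iic_neg hF hμ (x - 1) (by linarith)]
    have e1 : μ.real ((fun y => y / (y + 1)) ⁻¹' Set.Iic x) = μ.real (Set.Iic (x / (1 - x))) := by
      apply measureReal_congr
      filter_upwards [ae_pos hF hμ] with y hy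
      apply propext
      change y / (y + 1) ≤ x ↔ y ≤ x / (1 - x)
      rw [div_le_iff₀ (by positivity), le_div_iff₀ (by linarith)]
      constructor <;> intro h <;> linarith
    rw [e1]
    rcases lt_or_ge x 0 with h0 | h0
    · rw [mu_Iic_neg hF hμ x h0.le,
        mu_Iic_neg hF hμ _ (div_nonpos_of_nonpos_of_nonneg h0.le (by linarith))]
      simp
    · rw [mu_Iic hF hμ x h0, mu_Iic hF hμ _ (div_nonneg h0 (by linarith)), F_lo hF x h0 h1]
      simp
  · have e1 : μ.real ((fun y => y / (y + 1)) ⁻¹' Set.Iic x) = 1 := by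
      refine Eq.trans ?_ (probReal_univ (μ := μ))
      apply measureReal_congr
      filter_upwards [ae_pos hF hμ] with y hy
      apply propext
      refine iff_of_true ?_ (Set.mem_univ y)
      change y / (y + 1) ≤ x
      rw [div_le_iff₀ (by positivity)]
      nlinarith
    rw [e1, mu_Iic hF hμ x (by linarith), mu_Iic hF hμ _ (by linarith), F_hi hF x h1]

lemma meas_T (n : ℕ) : Measurable (fun y : ℝ => y / (y + 1) + n) := by fun_prop

lemma mu_fix {F : ℝ → ℝ}
    (hF : ∀ x : ℝ, 0 ≤ x → Tendsto (fun n => Fcw n x) atTop (nhds (F x)))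
    {μ : Measure ℝ} [IsProbabilityMeasure μ]
    (hμ : ∀ a b : ℝ, a ≤ b → μ (Set.Ioc a b) = ENNReal.ofReal (F b - F a))
    : μ = (2⁻¹ : ENNReal) • (μ.map (fun y => y / (y + 1)) + μ.map (fun y => y + 1)) := by
  have : IsFiniteMeasure
    ((2⁻¹ : ENNReal) • (μ.map (fun y => y / (y + 1)) + μ.map (fun y => y + 1))) :=
      Measure.smul_finite _ (by simp)
  apply Measure.ext_of_Iic
  intro x
  rw [← ENNReal.toReal_eq_toReal_iff' (measure_ne_top _ _) (measure_ne_top _ _)]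
  have := mu_fix_Iic hF hμ x
  rw [Measure.smul_apply, Measure.add_apply, Measure.map_apply (by fun_prop) measurableSet_Iic,
    Measure.map_apply (by fun_prop) measurableSet_Iic, smul_eq_mul, ENNReal.toReal_mul,
    ENNReal.toReal_add (measure_ne_top _ _) (measure_ne_top _ _)]
  simp only [Measure.real] at this
  rw [this]
  simp
  ring

lemma mu_fix_real {F : ℝ → ℝ}
    (hF : ∀ x : ℝ, 0 ≤ x → Tendsto (fun n => Fcw n x) atTop (nhds (F x)))
    {μ : Measure ℝ} [IsProbabilityMeasure μ]
    (hμ : ∀ a b : ℝ, a ≤ b → μ (Set.Ioc a b) = ENNReal.ofReal (F b - F a))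
    (s : Set ℝ) (hs : MeasurableSet s) : μ.real s =
    (μ.real ((fun y => y / (y + 1)) ⁻¹' s) + μ.real ((fun y => y + 1) ⁻¹' s)) / 2 := by
  have := congrArg (fun ν : Measure ℝ => (ν s).toReal) (mu_fix hF hμ)
  rw [Measure.smul_apply, Measure.add_apply, Measure.map_apply (by fun_prop) hs,
    Measure.map_apply (by fun_prop) hs, smul_eq_mul, ENNReal.toReal_mul,
    ENNReal.toReal_add (measure_ne_top _ _) (measure_ne_top _ _)] at this
  simp only [Measure.real]
  rw [this]
  simp
  ring

lemma mu_iter {F : ℝ → ℝ}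
    (hF : ∀ x : ℝ, 0 ≤ x → Tendsto (fun n => Fcw n x) atTop (nhds (F x)))
    {μ : Measure ℝ} [IsProbabilityMeasure μ]
    (hμ : ∀ a b : ℝ, a ≤ b → μ (Set.Ioc a b) = ENNReal.ofReal (F b - F a))
    (s : Set ℝ) (hs : MeasurableSet s) (n : ℕ) : μ.real s =
    (∑ k ∈ Finset.range n, (1 / 2) ^ (k + 1) * μ.real ((fun y => y / (y + 1) + k) ⁻¹' s))
      + (1 / 2) ^ n * μ.real ((fun y => y + n) ⁻¹' s) := by
  induction n with
  | zero => simp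
  | succ n ih =>
    rw [ih, Finset.sum_range_succ, mu_fix_real hF hμ ((fun y => y + (n:ℝ)) ⁻¹' s)
      (hs.preimage (by fun_prop))]
    have : (fun y : ℝ => y + 1) ⁻¹' ((fun y => y + (n:ℝ)) ⁻¹' s)
        = (fun y => y + ((n + 1 : ℕ) : ℝ)) ⁻¹' s := by
      ext y; simp [add_assoc, add_comm (1:ℝ)]
    rw [this]
    have : (fun y : ℝ => y / (y + 1)) ⁻¹' ((fun y => y + (n:ℝ)) ⁻¹' s)
        = (fun y => y / (y + 1) + (n : ℝ)) ⁻¹' s := rfl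
    rw [this]
    ring

lemma mu_hasSum {F : ℝ → ℝ}
    (hF : ∀ x : ℝ, 0 ≤ x → Tendsto (fun n => Fcw n x) atTop (nhds (F x)))
    {μ : Measure ℝ} [IsProbabilityMeasure μ]
    (hμ : ∀ a b : ℝ, a ≤ b → μ (Set.Ioc a b) = ENNReal.ofReal (F b - F a))
    (s : Set ℝ) (hs : MeasurableSet s) :
    HasSum (fun k : ℕ => (1 / 2) ^ (k + 1) * μ.real ((fun y => y / (y + 1) + k) ⁻¹' s))
      (μ.real s) := by
  rw [hasSum_iff_tendsto_nat_of_nonneg (fun k => by positivity)]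
  have h : Tendsto (fun n : ℕ => μ.real s - (1 / 2 : ℝ) ^ n * μ.real ((fun y => y + (n:ℝ)) ⁻¹' s))
      atTop (nhds (μ.real s - 0)) := by
    refine Tendsto.sub tendsto_const_nhds ?_
    refine squeeze_zero (fun n => by positivity) (fun n => ?_)
      (tendsto_pow_atTop_nhds_zero_of_lt_one (r := (1/2 : ℝ)) (by norm_num) (by norm_num))
    exact mul_le_of_le_one_right (by positivity) measureReal_le_one
  rw [sub_zero] at h
  refine h.congr fun n => ?_
  have := mu_iter hF hμ s hs n
  linarith

lemma mu_sum {F : ℝ → ℝ}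
    (hF : ∀ x : ℝ, 0 ≤ x → Tendsto (fun n => Fcw n x) atTop (nhds (F x)))
    {μ : Measure ℝ} [IsProbabilityMeasure μ]
    (hμ : ∀ a b : ℝ, a ≤ b → μ (Set.Ioc a b) = ENNReal.ofReal (F b - F a))
    : μ = Measure.sum
    (fun k : ℕ => ENNReal.ofReal ((1 / 2) ^ (k + 1)) • μ.map (fun y : ℝ => y / (y + 1) + (k:ℝ))) := by
  ext s hs
  rw [Measure.sum_apply _ hs]
  have h := mu_hasSum hF hμ s hs
  have h2 : μ s = ENNReal.ofReal (μ.real s) := by simp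
  rw [h2, ← h.tsum_eq, ENNReal.ofReal_tsum_of_nonneg (fun k => by positivity) h.summable]
  congr 1
  ext k
  rw [Measure.smul_apply, Measure.map_apply (meas_T k) hs, smul_eq_mul,
    ENNReal.ofReal_mul (by positivity)]
  simp

lemma summ_b (s : ℕ) : Summable (fun n : ℕ => (n : ℝ) ^ s / 2 ^ (n + 1)) := by
  have := (summable_pow_mul_geometric_of_norm_lt_one (R := ℝ) s (r := 1/2) (by norm_num)).mul_left (1/2)
  refine this.congr fun n => ?_
  rw [pow_succ, one_div_pow]
  field_simp

lemma ae_T {F : ℝ → ℝ}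
    (hF : ∀ x : ℝ, 0 ≤ x → Tendsto (fun n => Fcw n x) atTop (nhds (F x)))
    {μ : Measure ℝ} [IsProbabilityMeasure μ]
    (hμ : ∀ a b : ℝ, a ≤ b → μ (Set.Ioc a b) = ENNReal.ofReal (F b - F a))
    : ∀ᵐ y ∂μ, 0 ≤ y / (y + 1) ∧ y / (y + 1) ≤ 1 := by
  filter_upwards [ae_pos hF hμ] with y hy
  refine ⟨by positivity, ?_⟩
  rw [div_le_one (by positivity)]
  linarith

lemma int_T {F : ℝ → ℝ}
    (hF : ∀ x : ℝ, 0 ≤ x → Tendsto (fun n => Fcw n x) atTop (nhds (F x)))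
    {μ : Measure ℝ} [IsProbabilityMeasure μ]
    (hμ : ∀ a b : ℝ, a ≤ b → μ (Set.Ioc a b) = ENNReal.ofReal (F b - F a))
    (i : ℕ) : Integrable (fun y : ℝ => (y / (y + 1)) ^ i) μ := by
  refine Integrable.of_bound (C := 1) (Measurable.aestronglyMeasurable (by fun_prop)) ?_
  filter_upwards [ae_T hF hμ] with y hy
  rw [Real.norm_eq_abs, abs_of_nonneg (pow_nonneg hy.1 _)]
  exact pow_le_one₀ hy.1 hy.2

lemma int_Tn {F : ℝ → ℝ}
    (hF : ∀ x : ℝ, 0 ≤ x → Tendsto (fun n => Fcw n x) atTop (nhds (F x)))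
    {μ : Measure ℝ} [IsProbabilityMeasure μ]
    (hμ : ∀ a b : ℝ, a ≤ b → μ (Set.Ioc a b) = ENNReal.ofReal (F b - F a))
    (L n : ℕ) : Integrable (fun y : ℝ => (y / (y + 1) + n) ^ L) μ := by
  simp only [add_pow]
  refine integrable_finsetSum _ fun i _ => ?_
  exact ((int_T hF hμ i).mul_const _).mul_const _

lemma integral_Tn {F : ℝ → ℝ}
    (hF : ∀ x : ℝ, 0 ≤ x → Tendsto (fun n => Fcw n x) atTop (nhds (F x)))
    {μ : Measure ℝ} [IsProbabilityMeasure μ]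
    (hμ : ∀ a b : ℝ, a ≤ b → μ (Set.Ioc a b) = ENNReal.ofReal (F b - F a))
    (L n : ℕ) : ∫ y, (y / (y + 1) + n) ^ L ∂μ =
    ∑ i ∈ Finset.range (L + 1), (L.choose i : ℝ) * (∫ x, (x / (x + 1)) ^ i ∂μ) * (n:ℝ) ^ (L - i) := by
  simp only [add_pow]
  rw [integral_finsetSum _ fun i _ => ((int_T hF hμ i).mul_const _).mul_const _]
  refine Finset.sum_congr rfl fun i _ => ?_
  rw [integral_mul_const, integral_mul_const]
  ring

lemma final_hasSum {F : ℝ → ℝ}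
    (hF : ∀ x : ℝ, 0 ≤ x → Tendsto (fun n => Fcw n x) atTop (nhds (F x)))
    {μ : Measure ℝ} [IsProbabilityMeasure μ]
    (hμ : ∀ a b : ℝ, a ≤ b → μ (Set.Ioc a b) = ENNReal.ofReal (F b - F a))
    (L : ℕ) : HasSum (fun n : ℕ => (1/2 : ℝ) ^ (n + 1) * ∫ y, (y / (y + 1) + n) ^ L ∂μ)
    (∑ i ∈ Finset.range (L + 1),
      (L.choose i : ℝ) * (∫ x, (x / (x + 1)) ^ i ∂μ) *
        ∑' n : ℕ, (n : ℝ) ^ (L - i) / 2 ^ (n + 1)) := by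
  have := hasSum_sum (s := Finset.range (L + 1)) fun i _ =>
    (summ_b (L - i)).hasSum.mul_left ((L.choose i : ℝ) * (∫ x, (x / (x + 1)) ^ i ∂μ))
  refine this.congr_fun fun n => ?_
  rw [integral_Tn hF hμ, Finset.mul_sum]
  refine Finset.sum_congr rfl fun i _ => ?_
  rw [one_div_pow]
  ring

lemma final {F : ℝ → ℝ}
    (hF : ∀ x : ℝ, 0 ≤ x → Tendsto (fun n => Fcw n x) atTop (nhds (F x)))
    {μ : Measure ℝ} [IsProbabilityMeasure μ]
    (hμ : ∀ a b : ℝ, a ≤ b → μ (Set.Ioc a b) = ENNReal.ofReal (F b - F a))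
    (L : ℕ) : HasSum (fun n : ℕ => (1/2 : ℝ) ^ (n + 1) * ∫ y, (y / (y + 1) + n) ^ L ∂μ)
    (∫ x, x ^ L ∂μ) := by
  have e : ∀ (f : ℝ → ℝ) (hf : Measurable f) (n : ℕ),
      ∫ x, f x ∂(ENNReal.ofReal ((1 / 2) ^ (n + 1)) • μ.map (fun y : ℝ => y / (y + 1) + (n:ℝ)))
      = (1/2 : ℝ) ^ (n + 1) * ∫ y, f (y / (y + 1) + n) ∂μ := by
    intro f hf n
    rw [integral_smul_measure, integral_map (meas_T n).aemeasurable hf.aestronglyMeasurable,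
      ENNReal.toReal_ofReal (by positivity), smul_eq_mul]
  have hi : Integrable (fun x : ℝ => x ^ L) (Measure.sum
    (fun k : ℕ => ENNReal.ofReal ((1 / 2) ^ (k + 1)) • μ.map (fun y : ℝ => y / (y + 1) + (k:ℝ)))) := by
    refine integrable_sum_measure (fun n => ?_) ?_
    · refine Integrable.smul_measure ?_ (by simp)
      rw [integrable_map_measure (by fun_prop) (meas_T n).aemeasurable]
      exact int_Tn hF hμ L n
    · refine (final_hasSum hF hμ L).summable.congr fun n => ?_
      rw [e (fun x => ‖x ^ L‖) (by fun_prop)]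
      congr 1
      apply integral_congr_ae
      filter_upwards [ae_T hF hμ] with y hy
      have := hy.1
      rw [Real.norm_eq_abs, abs_of_nonneg (by positivity)]
  have h := hasSum_integral_measure hi
  rw [← mu_sum hF hμ] at h
  refine h.congr_fun fun n => ?_
  rw [e (fun x => x ^ L) (by fun_prop)]

/-- Let `F` be the limit distribution function of the Calkin–Wilf tree and `μ`
its Lebesgue–Stieltjes (probability) measure, so that `μ(a,b] = F(b) − F(a)`.
With `M_k = ∫ x^k dμ`, `m_k = ∫ (x/(x+1))^k dμ` and
`b_s = ∑_{n=0}^∞ n^s/2^(n+1)`, the moments satisfy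
`M_L = ∑_{i=0}^{L} C(L,i)·m_i·b_{L−i}` for every `L ≥ 0`. -/
theorem calkin_wilf_moments_formula (F : ℝ → ℝ)
    (hF : ∀ x : ℝ, 0 ≤ x → Tendsto (fun n => Fcw n x) atTop (nhds (F x)))
    (μ : Measure ℝ) (hprob : IsProbabilityMeasure μ)
    (hμ : ∀ a b : ℝ, a ≤ b → μ (Set.Ioc a b) = ENNReal.ofReal (F b - F a))
    (L : ℕ) :
    ∫ x, x ^ L ∂μ = ∑ i ∈ Finset.range (L + 1),
      (L.choose i : ℝ) * (∫ x, (x / (x + 1)) ^ i ∂μ) *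
        ∑' n : ℕ, (n : ℝ) ^ (L - i) / 2 ^ (n + 1) := by
  exact (final hF hμ L).unique (final_hasSum hF hμ L)
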